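/- Let (U,F,t) be a Set Cover instance in which every element belongs to at least one set. Then there exists X ⊆ F with |X| ≤ t and ∪_{S∈X} S = U if and only if the subdivided-star gerrymandering instance constructed from (U,F,t) admits a district-partition into k = t+4 districts that is satisfying for the preferred candidate p. -/

import Mathlib

attribute [local instance] Classical.propDecidable

/-- Candidate `c` *leads* district `D` (unweighted): `c`'s vote count is at least that of
every candidate. -/
def leadsIn {V C : Type*} (χ : V → C) (c : C) (D : Finset V) : Prop :=
  ∀ c' : C, (D.filter fun x => χ x = c').card ≤ (D.filter fun x => χ x = c).card

/-- Candidate `c` *wins* district `D` (unweighted): `c`'s vote count strictly exceeds that of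
every other candidate. -/
def winsIn {V C : Type*} (χ : V → C) (c : C) (D : Finset V) : Prop :=
  ∀ c' : C, c' ≠ c → (D.filter fun x => χ x = c').card < (D.filter fun x => χ x = c).card

/-- A district-partition of `G` into `k` districts: `k` pairwise-disjoint nonempty vertex sets
covering all vertices, each inducing a connected subgraph. -/
def IsDistrictPartition {V : Type*} (G : SimpleGraph V) (k : ℕ) (P : Finset (Finset V)) : Prop :=
  P.card = k ∧ (∀ D ∈ P, D.Nonempty) ∧
    (∀ D ∈ P, ∀ D' ∈ P, D ≠ D' → Disjoint D D') ∧
    (∀ x : V, ∃ D ∈ P, x ∈ D) ∧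
    (∀ D ∈ P, (G.induce (D : Set V)).Connected)

/-- A district-partition is *satisfying* for the preferred candidate `p` if `p` wins strictly
more districts than any other candidate leads. -/
def SatisfyingFor {V C : Type*} (χ : V → C) (p : C) (P : Finset (Finset V)) : Prop :=
  ∀ q : C, q ≠ p →
    (P.filter fun D => leadsIn χ q D).card < (P.filter fun D => winsIn χ p D).card

/-- Vertices of the subdivided-star gerrymandering instance: the root `r`; branch 1 vertices
`c_1, c_2, u_1, …, u_n`; branch 2 vertices `w_1, …, w_{t-1}`; and, on each of the `t`
selection branches `s`, the initial vertices `v_0^1, …, v_0^n` (constructor `v0`), the group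
vertices `x_i` and `v_i^j` for `i ∈ [m]` (group `g_i`), and the final vertices
`y_0, …, y_m`. -/
inductive VS (n m t : ℕ) : Type where
  | root
  | c1
  | c2
  | u (j : Fin n)
  | w (i : Fin (t - 1))
  | v0 (s : Fin t) (j : Fin n)
  | x (s : Fin t) (i : Fin m)
  | v (s : Fin t) (i : Fin m) (j : Fin n)
  | y (s : Fin t) (i : Fin (m + 1))
  deriving DecidableEq, Fintype

/-- Candidates of the subdivided-star instance: the preferred candidate `p`, the ally `q`,
element candidates `a_j` for `j ∈ [n]`, and branch candidates `b_s` for `s ∈ [t]`. -/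
inductive CS (n t : ℕ) : Type where
  | p
  | q
  | a (j : Fin n)
  | b (s : Fin t)
  deriving DecidableEq

/-- Candidate preferences of the subdivided-star instance. -/
def chiS {n m t : ℕ} : VS n m t → CS n t
  | .root => .q
  | .c1 => .p
  | .c2 => .p
  | .u j => .a j
  | .w _ => .q
  | .v0 _ j => .a j
  | .x _ _ => .q
  | .v _ _ j => .a j
  | .y s _ => .b s

/-- Position of each non-root vertex along its branch, as a pair
(branch index, 0-based distance from the root along the branch minus one); the vertex at
position 0 of each branch is adjacent to the root.  Branch 0 is `c_1, c_2, u_1, …, u_n`;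
branch 1 is `w_1, …, w_{t-1}`; branch `2 + s` is selection branch `s`, ordered as
`v_0^1, …, v_0^n`, then groups `g_1, …, g_m` (group `g_i` consists of the vertices `v_i^j`
with `e_j ∉ S_i` in increasing order of `j`, then `x_i`, then the vertices `v_i^j` with
`e_j ∈ S_i` in increasing order of `j`), then `y_0, …, y_m`. -/
def posS {n m t : ℕ} (S : Fin m → Finset (Fin n)) : VS n m t → Option (ℕ × ℕ)
  | .root => none
  | .c1 => some (0, 0)
  | .c2 => some (0, 1)
  | .u j => some (0, 2 + (j : ℕ))
  | .w i => some (1, (i : ℕ))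
  | .v0 s j => some (2 + (s : ℕ), (j : ℕ))
  | .x s i => some (2 + (s : ℕ), n + (i : ℕ) * (n + 1) + (n - (S i).card))
  | .v s i j => some (2 + (s : ℕ), n + (i : ℕ) * (n + 1) +
      (if j ∈ S i then n - (S i).card + 1 + ((S i).filter fun j' => j' < j).card
       else ((S i)ᶜ.filter fun j' => j' < j).card))
  | .y s i => some (2 + (s : ℕ), n + m * (n + 1) + (i : ℕ))

/-- The subdivided star: the root is adjacent to the vertex at position 0 of each branch, and
vertices at consecutive positions of the same branch are adjacent. -/
def GS {n m t : ℕ} (S : Fin m → Finset (Fin n)) : SimpleGraph (VS n m t) :=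
  SimpleGraph.fromRel (fun a b =>
    (a = VS.root ∧ ∃ br, posS S b = some (br, 0)) ∨
    (∃ br k, posS S a = some (br, k) ∧ posS S b = some (br, k + 1)))

noncomputable def cntS {V C : Type*} (χ : V → C) (c : C) (D : Finset V) : ℕ :=
  (D.filter fun x => χ x = c).card

theorem cntS_pos {V C : Type*} (χ : V → C) (c : C) (D : Finset V) :
    0 < cntS χ c D ↔ ∃ x ∈ D, χ x = c := by
  unfold cntS
  rw [Finset.card_pos]
  constructor
  · rintro ⟨x, hx⟩
    rw [Finset.mem_filter] at hx
    exact ⟨x, hx.1, hx.2⟩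
  · rintro ⟨x, h1, h2⟩
    exact ⟨x, by rw [Finset.mem_filter]; exact ⟨h1, h2⟩⟩

theorem leads_cnt {V C : Type*} (χ : V → C) (c : C) (D : Finset V) :
    leadsIn χ c D ↔ ∀ c', cntS χ c' D ≤ cntS χ c D := Iff.rfl

theorem wins_cnt {V C : Type*} (χ : V → C) (c : C) (D : Finset V) :
    winsIn χ c D ↔ ∀ c', c' ≠ c → cntS χ c' D < cntS χ c D := Iff.rfl

theorem exists_leads {V C : Type*} (χ : V → C) (D : Finset V) (hD : D.Nonempty) :
    ∃ c, leadsIn χ c D := by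
  obtain ⟨x, hx, hm⟩ := Finset.exists_max_image D (fun x => cntS χ (χ x) D) hD
  refine ⟨χ x, fun c' => ?_⟩
  change cntS χ c' D ≤ cntS χ (χ x) D
  by_cases h : 0 < cntS χ c' D
  · obtain ⟨z, hz, rfl⟩ := (cntS_pos χ c' D).1 h
    exact hm z hz
  · omega

theorem leads_mem {V C : Type*} (χ : V → C) (c : C) (D : Finset V) (hD : D.Nonempty)
    (h : leadsIn χ c D) : ∃ x ∈ D, χ x = c := by
  rw [← cntS_pos]
  obtain ⟨z, hz⟩ := hD
  have h1 : 0 < cntS χ (χ z) D := (cntS_pos _ _ _).2 ⟨z, hz, rfl⟩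
  exact lt_of_lt_of_le h1 (h _)

theorem cntS_le_of_inj {V C : Type*} (χ : V → C) (c c' : C) (D : Finset V) (f : V → V)
    (hf : ∀ x ∈ D, χ x = c → f x ∈ D ∧ χ (f x) = c')
    (hi : ∀ x ∈ D, ∀ y ∈ D, χ x = c → χ y = c → f x = f y → x = y) :
    cntS χ c D ≤ cntS χ c' D := by
  unfold cntS
  apply Finset.card_le_card_of_injOn f
  · intro x hx
    simp only [Finset.coe_filter, Set.mem_ofPred_eq] at hx ⊢
    exact hf x hx.1 hx.2
  · intro x hx y hy h
    simp only [Finset.coe_filter, Set.mem_ofPred_eq] at hx hy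
    exact hi x hx.1 y hy.1 hx.2 hy.2 h

theorem cntS_lt_of_inj {V C : Type*} (χ : V → C) (c c' : C) (D : Finset V) (f : V → V)
    (hf : ∀ x ∈ D, χ x = c → f x ∈ D ∧ χ (f x) = c')
    (hi : ∀ x ∈ D, ∀ y ∈ D, χ x = c → χ y = c → f x = f y → x = y)
    (z : V) (hz : z ∈ D) (hzc : χ z = c') (hzf : ∀ x ∈ D, χ x = c → f x ≠ z) :
    cntS χ c D < cntS χ c' D := by
  have h1 : cntS χ c D ≤ ((D.filter fun x => χ x = c').erase z).card := by
    unfold cntS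
    apply Finset.card_le_card_of_injOn f
    · intro x hx
      simp only [Finset.coe_filter, Set.mem_ofPred_eq] at hx
      have := hf x hx.1 hx.2
      have h3 := hzf x hx.1 hx.2
      simp only [Finset.mem_coe, Finset.mem_erase, Finset.mem_filter]
      exact ⟨h3, this⟩
    · intro x hx y hy h
      simp only [Finset.coe_filter, Set.mem_ofPred_eq] at hx hy
      exact hi x hx.1 y hy.1 hx.2 hy.2 h
  refine lt_of_le_of_lt h1 (Finset.card_erase_lt_of_mem ?_)
  rw [Finset.mem_filter]; exact ⟨hz, hzc⟩

/-- offset within a group -/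
def offS {n m : ℕ} (S : Fin m → Finset (Fin n)) (i : Fin m) : Option (Fin n) → ℕ
  | none => n - (S i).card
  | some j => (if j ∈ S i then n - (S i).card + 1 + ((S i).filter fun j' => j' < j).card
       else ((S i)ᶜ.filter fun j' => j' < j).card)

theorem pos_x {n m t : ℕ} (S : Fin m → Finset (Fin n)) (s : Fin t) (i : Fin m) :
    posS S (VS.x s i) = some (2 + (s : ℕ), n + (i : ℕ) * (n + 1) + offS S i none) := rfl

theorem pos_v {n m t : ℕ} (S : Fin m → Finset (Fin n)) (s : Fin t) (i : Fin m) (j : Fin n) :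
    posS S (VS.v s i j) = some (2 + (s : ℕ), n + (i : ℕ) * (n + 1) + offS S i (some j)) := rfl

theorem rank_lt {n : ℕ} (A : Finset (Fin n)) (j : Fin n) (h : j ∈ A) :
    (A.filter fun j' => j' < j).card < A.card := by
  apply Finset.card_lt_card
  rw [Finset.filter_ssubset]
  exact ⟨j, h, lt_irrefl _⟩

theorem rank_strict {n : ℕ} (A : Finset (Fin n)) (j k : Fin n) (h : j ∈ A) (hjk : j < k) :
    (A.filter fun j' => j' < j).card < (A.filter fun j' => j' < k).card := by
  apply Finset.card_lt_card
  rw [Finset.ssubset_iff_of_subset]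
  · exact ⟨j, by simp [h, hjk], by simp⟩
  · intro x hx
    simp only [Finset.mem_filter] at hx ⊢
    exact ⟨hx.1, hx.2.trans hjk⟩

theorem rank_inj {n : ℕ} (A : Finset (Fin n)) (j k : Fin n) (h : j ∈ A) (hk : k ∈ A)
    (e : (A.filter fun j' => j' < j).card = (A.filter fun j' => j' < k).card) : j = k := by
  rcases lt_trichotomy j k with h1 | h1 | h1
  · have := rank_strict A j k h h1; omega
  · exact h1
  · have := rank_strict A k j hk h1; omega

theorem off_in {n m : ℕ} (S : Fin m → Finset (Fin n)) (i : Fin m) (j : Fin n) (h : j ∈ S i) :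
    offS S i none < offS S i (some j) ∧ offS S i (some j) ≤ n := by
  have h1 := rank_lt (S i) j h
  have h2 : (S i).card ≤ n := by simpa using Finset.card_le_univ (S i)
  simp only [offS, if_pos h]
  omega

theorem off_out {n m : ℕ} (S : Fin m → Finset (Fin n)) (i : Fin m) (j : Fin n) (h : j ∉ S i) :
    offS S i (some j) < offS S i none := by
  have h1 := rank_lt (S i)ᶜ j (by simpa using h)
  have h2 : (S i).card ≤ n := by simpa using Finset.card_le_univ (S i)
  rw [Finset.card_compl, Fintype.card_fin] at h1
  simp only [offS, if_neg h]
  omega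

theorem off_le {n m : ℕ} (S : Fin m → Finset (Fin n)) (i : Fin m) (o : Option (Fin n)) :
    offS S i o ≤ n := by
  have h0 : offS S i none ≤ n := by simp [offS]
  rcases o with _ | j
  · exact h0
  · by_cases h : j ∈ S i
    · exact (off_in S i j h).2
    · exact (off_out S i j h).le.trans h0

theorem off_inj {n m : ℕ} (S : Fin m → Finset (Fin n)) (i : Fin m) :
    Function.Injective (offS S i) := by
  have key : ∀ j, offS S i none ≠ offS S i (some j) := by
    intro j
    by_cases h : j ∈ S i
    · exact (off_in S i j h).1.ne
    · exact (off_out S i j h).ne'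
  rintro (_ | j) (_ | k) h
  · rfl
  · exact (key k h).elim
  · exact (key j h.symm).elim
  · congr 1
    by_cases hj : j ∈ S i <;> by_cases hk : k ∈ S i
    · simp only [offS, if_pos hj, if_pos hk] at h
      exact rank_inj _ _ _ hj hk (by omega)
    · have h1 := off_in S i j hj
      have h2 := off_out S i k hk
      omega
    · have h1 := off_in S i k hk
      have h2 := off_out S i j hj
      omega
    · simp only [offS, if_neg hj, if_neg hk] at h
      exact rank_inj _ _ _ (by simpa using hj) (by simpa using hk) h

theorem off_surj {n m : ℕ} (S : Fin m → Finset (Fin n)) (i : Fin m) (k : ℕ) (hk : k ≤ n) :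
    ∃ o, offS S i o = k := by
  let f : Option (Fin n) → Fin (n + 1) := fun o => ⟨offS S i o, Nat.lt_succ_of_le (off_le S i o)⟩
  have hf : Function.Bijective f := by
    rw [Fintype.bijective_iff_injective_and_card]
    constructor
    · intro a b h
      exact off_inj S i (by simpa [f] using h)
    · simp
  obtain ⟨o, ho⟩ := hf.2 ⟨k, by omega⟩
  exact ⟨o, by simpa [f] using ho⟩

theorem dec_aux (n i i' o o' : ℕ) (h : o ≤ n) (h' : o' ≤ n)
    (e : i * (n + 1) + o = i' * (n + 1) + o') : i = i' ∧ o = o' := by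
  have hi : i = i' := by
    rcases lt_trichotomy i i' with h1 | h1 | h1
    · have : (i + 1) * (n + 1) ≤ i' * (n + 1) := Nat.mul_le_mul_right _ h1
      rw [Nat.add_mul] at this
      omega
    · exact h1
    · have : (i' + 1) * (n + 1) ≤ i * (n + 1) := Nat.mul_le_mul_right _ h1
      rw [Nat.add_mul] at this
      omega
  subst hi
  exact ⟨rfl, by omega⟩

theorem grp_lt (n m i o : ℕ) (hi : i < m) (h : o ≤ n) : i * (n + 1) + o < m * (n + 1) := by
  have : (i + 1) * (n + 1) ≤ m * (n + 1) := Nat.mul_le_mul_right _ hi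
  rw [Nat.add_mul] at this
  omega

theorem grp_lt2 (n i i' o o' : ℕ) (hi : i < i') (h : o ≤ n) :
    i * (n + 1) + o < i' * (n + 1) + o' := by
  have := grp_lt n i' i o hi h
  omega

theorem pos_inj {n m t : ℕ} (S : Fin m → Finset (Fin n)) :
    Function.Injective (posS (t := t) S) := by
  intro a b h
  have gx : ∀ (i : Fin m) (o : Option (Fin n)),
    (i : ℕ) * (n + 1) + offS S i o < m * (n + 1) := fun i o => grp_lt _ _ _ _ i.2 (off_le S i o)
  have gg : ∀ (i i' : Fin m) (o o' : Option (Fin n)),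
      (i : ℕ) * (n + 1) + offS S i o = (i' : ℕ) * (n + 1) + offS S i' o' → i = i' ∧ o = o' := by
    intro i i' o o' e
    have := dec_aux n i i' _ _ (off_le S i o) (off_le S i' o') e
    have hi : i = i' := Fin.ext this.1
    subst hi
    exact ⟨rfl, off_inj S i this.2⟩
  cases a <;> cases b <;> (try rw [pos_x] at h) <;> (try rw [pos_v] at h) <;>
    (try rw [pos_x] at h) <;> (try rw [pos_v] at h) <;>
    simp only [posS, Option.some.injEq, Prod.mk.injEq, reduceCtorEq] at h <;>
    first
    | rfl
    | (simp at h; done)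
    | (exfalso; omega)
    | (congr 1 <;> (apply Fin.ext; omega))
    | skip
  case x.x s i s' i' =>
    have h1 := gg i i' none none (by omega)
    obtain ⟨rfl, _⟩ := h1
    congr 1; apply Fin.ext; omega
  case x.v s i s' i' j' =>
    have h1 := gg i i' none (some j') (by omega)
    simp at h1
  case v.x s i j s' i' =>
    have h1 := gg i i' (some j) none (by omega)
    simp at h1
  case v.v s i j s' i' j' =>
    have h1 := gg i i' (some j) (some j') (by omega)
    obtain ⟨rfl, h2⟩ := h1
    obtain rfl := Option.some.inj h2
    congr 1; apply Fin.ext; omega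
  case x.y s i s' i' => have := gx i none; exfalso; omega
  case v.y s i j s' i' => have := gx i (some j); exfalso; omega
  case y.x s' i' s i => have := gx i none; exfalso; omega
  case y.v s' i' s i j => have := gx i (some j); exfalso; omega

theorem cntS_le_one {V C : Type*} (χ : V → C) (c : C) (D : Finset V)
    (h : ∀ a ∈ D, ∀ b ∈ D, χ a = c → χ b = c → a = b) : cntS χ c D ≤ 1 := by
  unfold cntS
  rw [Finset.card_le_one]
  intro a ha b hb
  rw [Finset.mem_filter] at ha hb
  exact h a ha.1 b hb.1 ha.2 hb.2

theorem cross_edge {V : Type*} (G : SimpleGraph V) (D : Finset V)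
    (hD : (G.induce (D : Set V)).Connected) (A : Set V) (a b : V) (ha : a ∈ D) (hb : b ∈ D)
    (haA : a ∈ A) (hbA : b ∉ A) : ∃ x ∈ D, ∃ y ∈ D, x ∈ A ∧ y ∉ A ∧ G.Adj x y := by
  obtain ⟨w⟩ := hD.preconnected ⟨a, ha⟩ ⟨b, hb⟩
  obtain ⟨d, -, h1, h2⟩ := w.exists_boundary_dart {z | (z : V) ∈ A} haA hbA
  exact ⟨d.fst, d.fst.2, d.snd, d.snd.2, h1, h2, d.adj⟩

theorem cutS {n m t : ℕ} (S : Fin m → Finset (Fin n)) (D : Finset (VS n m t))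
    (hD : ((GS S).induce (D : Set (VS n m t))).Connected) (br k k' : ℕ) (a b : VS n m t)
    (ha : a ∈ D) (hb : b ∈ D) (hk : k ≤ k') (hpa : posS S a = some (br, k'))
    (hpb : ∀ k'', k ≤ k'' → posS S b ≠ some (br, k'')) :
    ∃ x ∈ D, posS S x = some (br, k) ∧ ∃ y ∈ D, (k = 0 ∧ y = VS.root) ∨
      (∃ k0, k = k0 + 1 ∧ posS S y = some (br, k0)) := by
  obtain ⟨x, hx, y, hy, hxA, hyA, hadj⟩ := cross_edge (GS S) D hD
    {z | ∃ k'', k ≤ k'' ∧ posS S z = some (br, k'')} a b ha hb ⟨k', hk, hpa⟩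
    (by rintro ⟨k'', h1, h2⟩; exact hpb k'' h1 h2)
  obtain ⟨kx, hkx, hpx⟩ := hxA
  have hyA' : ∀ k'', k ≤ k'' → posS S y ≠ some (br, k'') := fun k'' h1 h2 => hyA ⟨k'', h1, h2⟩
  unfold GS at hadj
  rw [SimpleGraph.fromRel_adj] at hadj
  obtain ⟨hne, h | h⟩ := hadj
  · rcases h with ⟨h1, _⟩ | ⟨br', k1, h1, h2⟩
    · subst h1; simp [posS] at hpx
    · rw [hpx] at h1
      simp only [Option.some.injEq, Prod.mk.injEq] at h1
      obtain ⟨rfl, rfl⟩ := h1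
      exact absurd h2 (hyA' _ (by omega))
  · rcases h with ⟨h1, br', h2⟩ | ⟨br', k1, h1, h2⟩
    · rw [hpx] at h2
      simp only [Option.some.injEq, Prod.mk.injEq] at h2
      obtain ⟨rfl, rfl⟩ := h2
      obtain rfl : k = 0 := by omega
      exact ⟨x, hx, hpx, y, hy, Or.inl ⟨rfl, h1⟩⟩
    · rw [hpx] at h2
      simp only [Option.some.injEq, Prod.mk.injEq] at h2
      obtain ⟨rfl, rfl⟩ := h2
      have h3 : ¬ k ≤ k1 := fun h => hyA' k1 h h1
      obtain rfl : k = k1 + 1 := by omega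
      exact ⟨x, hx, hpx, y, hy, Or.inr ⟨k1, rfl, h1⟩⟩

theorem prefS {n m t : ℕ} (S : Fin m → Finset (Fin n)) (D : Finset (VS n m t))
    (hD : ((GS S).induce (D : Set (VS n m t))).Connected) (hr : VS.root ∈ D) (br k k' : ℕ)
    (a z : VS n m t) (ha : a ∈ D) (hpa : posS S a = some (br, k'))
    (hpz : posS S z = some (br, k)) (hk : k ≤ k') : z ∈ D := by
  obtain ⟨x, hx, hpx, _⟩ := cutS S D hD br k k' a VS.root ha hr hk hpa (by simp [posS])
  rw [← hpz] at hpx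
  rwa [← pos_inj S hpx]

theorem intS {n m t : ℕ} (S : Fin m → Finset (Fin n)) (D : Finset (VS n m t))
    (hD : ((GS S).induce (D : Set (VS n m t))).Connected) (br k k' k0 : ℕ)
    (b a z : VS n m t) (hb : b ∈ D) (hpb : posS S b = some (br, k0)) (ha : a ∈ D)
    (hpa : posS S a = some (br, k'))
    (hpz : posS S z = some (br, k)) (hk0 : k0 ≤ k) (hk : k ≤ k') : z ∈ D := by
  rcases hk0.lt_or_eq with h | rfl
  · obtain ⟨x, hx, hpx, _⟩ := cutS S D hD br k k' a b ha hb hk hpa (by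
      intro k'' h1 h2
      rw [hpb] at h2
      simp only [Option.some.injEq, Prod.mk.injEq] at h2
      omega)
    rw [← hpz] at hpx
    rwa [← pos_inj S hpx]
  · rw [← hpz] at hpb
    rwa [← pos_inj S hpb]

theorem brS {n m t : ℕ} (S : Fin m → Finset (Fin n)) (D : Finset (VS n m t))
    (hD : ((GS S).induce (D : Set (VS n m t))).Connected) (br k br' k' : ℕ)
    (a b : VS n m t) (ha : a ∈ D) (hb : b ∈ D) (hpa : posS S a = some (br, k))
    (hpb : posS S b = some (br', k')) (hr : VS.root ∉ D) : br = br' := by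
  by_contra hne
  obtain ⟨x, hx, hpx, y, hy, h⟩ := cutS S D hD br 0 k a b ha hb (Nat.zero_le _) hpa (by
    intro k'' _ h2
    rw [hpb] at h2
    simp only [Option.some.injEq, Prod.mk.injEq] at h2
    exact hne h2.1.symm)
  rcases h with ⟨_, rfl⟩ | ⟨k0, h, _⟩
  · exact hr hy
  · omega

theorem conn_of_desc {V : Type*} (G : SimpleGraph V) (D : Finset V) (d : V → ℕ) (b : V)
    (hb : b ∈ D) (h : ∀ x ∈ D, x ≠ b → ∃ y ∈ D, G.Adj x y ∧ d y < d x) :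
    (G.induce (D : Set V)).Connected := by
  have key : ∀ N, ∀ x, ∀ hx : x ∈ D, d x ≤ N →
      (G.induce (D : Set V)).Reachable ⟨x, hx⟩ ⟨b, hb⟩ := by
    intro N
    induction N with
    | zero =>
      intro x hx hd
      by_cases hxb : x = b
      · subst hxb; exact SimpleGraph.Reachable.refl _
      · obtain ⟨y, hy, _, hlt⟩ := h x hx hxb
        omega
    | succ N ih =>
      intro x hx hd
      by_cases hxb : x = b
      · subst hxb; exact SimpleGraph.Reachable.refl _
      · obtain ⟨y, hy, hadj, hlt⟩ := h x hx hxb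
        refine SimpleGraph.Reachable.trans (SimpleGraph.Adj.reachable ?_) (ih y hy (by omega))
        exact hadj
  have : Nonempty (D : Set V) := ⟨⟨b, hb⟩⟩
  refine ⟨fun x y => ?_⟩
  exact (key _ x.1 x.2 le_rfl).trans (key _ y.1 y.2 le_rfl).symm

theorem sel_surj {n m t : ℕ} (S : Fin m → Finset (Fin n)) (s : Fin t) (k : ℕ)
    (hk : k < n + m * (n + 1) + (m + 1)) : ∃ z : VS n m t, posS S z = some (2 + (s : ℕ), k) := by
  by_cases h1 : k < n
  · exact ⟨VS.v0 s ⟨k, h1⟩, rfl⟩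
  by_cases h2 : k < n + m * (n + 1)
  · have hi : (k - n) / (n + 1) < m := by
      rw [Nat.div_lt_iff_lt_mul (by omega)]; omega
    have hmod : (k - n) % (n + 1) ≤ n := Nat.lt_succ_iff.1 (Nat.mod_lt _ (by omega))
    have hdm := Nat.div_add_mod (k - n) (n + 1)
    obtain ⟨o, ho⟩ := off_surj S ⟨(k - n) / (n + 1), hi⟩ _ hmod
    rw [Nat.mul_comm] at hdm
    rcases o with _ | j
    · refine ⟨VS.x s ⟨(k - n) / (n + 1), hi⟩, ?_⟩
      rw [pos_x, ho]
      simp only [Option.some.injEq, Prod.mk.injEq, true_and]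
      omega
    · refine ⟨VS.v s ⟨(k - n) / (n + 1), hi⟩ j, ?_⟩
      rw [pos_v, ho]
      simp only [Option.some.injEq, Prod.mk.injEq, true_and]
      omega
  · refine ⟨VS.y s ⟨k - (n + m * (n + 1)), by omega⟩, ?_⟩
    simp only [posS, Option.some.injEq, Prod.mk.injEq, true_and]
    omega

theorem sel_bound {n m t : ℕ} (S : Fin m → Finset (Fin n)) (s : ℕ) (k : ℕ) (z : VS n m t)
    (h : posS S z = some (2 + s, k)) : s < t ∧ k < n + m * (n + 1) + (m + 1) := by
  cases z with
  | x s' i =>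
    have := grp_lt n m i _ i.2 (off_le S i none)
    rw [pos_x] at h
    simp only [Option.some.injEq, Prod.mk.injEq] at h
    omega
  | v s' i j =>
    have := grp_lt n m i _ i.2 (off_le S i (some j))
    rw [pos_v] at h
    simp only [Option.some.injEq, Prod.mk.injEq] at h
    omega
  | root => simp [posS] at h
  | _ =>
    simp only [posS, Option.some.injEq, Prod.mk.injEq] at h
    omega

theorem pred_ex {n m t : ℕ} (S : Fin m → Finset (Fin n)) (br k : ℕ) (z : VS n m t)
    (h : posS S z = some (br, k + 1)) : ∃ z' : VS n m t, posS S z' = some (br, k) := by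
  by_cases hb : 2 ≤ br
  · obtain ⟨s, rfl⟩ := Nat.exists_eq_add_of_le hb
    have := sel_bound S s _ z h
    exact sel_surj S ⟨s, this.1⟩ k (by omega)
  · cases z with
    | root => simp [posS] at h
    | c1 => simp [posS] at h
    | c2 => 
      simp only [posS, Option.some.injEq, Prod.mk.injEq] at h
      exact ⟨VS.c1, by simp only [posS, Option.some.injEq, Prod.mk.injEq]; omega⟩
    | u j =>
      simp only [posS, Option.some.injEq, Prod.mk.injEq] at h
      by_cases hj : (j : ℕ) = 0
      · exact ⟨VS.c2, by simp only [posS, Option.some.injEq, Prod.mk.injEq]; omega⟩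
      · exact ⟨VS.u ⟨j - 1, by omega⟩,
          by simp only [posS, Option.some.injEq, Prod.mk.injEq]; omega⟩
    | w i =>
      simp only [posS, Option.some.injEq, Prod.mk.injEq] at h
      exact ⟨VS.w ⟨i - 1, by omega⟩,
          by simp only [posS, Option.some.injEq, Prod.mk.injEq]; omega⟩
    | _ =>
      simp only [posS, Option.some.injEq, Prod.mk.injEq] at h
      omega

def depS {n m t : ℕ} (S : Fin m → Finset (Fin n)) (z : VS n m t) : ℕ :=
  match posS S z with
  | none => 0
  | some (_, k) => k + 1

/-- every non-root vertex has a parent -/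
theorem par_ex {n m t : ℕ} (S : Fin m → Finset (Fin n)) (br k : ℕ) (z : VS n m t)
    (h : posS S z = some (br, k)) : ∃ z' : VS n m t, (GS S).Adj z z' ∧ depS S z' < depS S z ∧
      ((k = 0 ∧ z' = VS.root) ∨ ∃ k0, k = k0 + 1 ∧ posS S z' = some (br, k0)) := by
  rcases k with _ | k
  · refine ⟨VS.root, ?_, ?_, Or.inl ⟨rfl, rfl⟩⟩
    · unfold GS
      rw [SimpleGraph.fromRel_adj]
      refine ⟨?_, Or.inr (Or.inl ⟨rfl, br, h⟩)⟩
      rintro rfl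
      simp [posS] at h
    · have h1 : depS S (VS.root : VS n m t) = 0 := rfl
      have h2 : depS S z = 0 + 1 := by simp only [depS, h]
      omega
  · obtain ⟨z', hz'⟩ := pred_ex S br k z h
    refine ⟨z', ?_, ?_, Or.inr ⟨k, rfl, hz'⟩⟩
    · unfold GS
      rw [SimpleGraph.fromRel_adj]
      refine ⟨?_, Or.inr (Or.inr ⟨br, k, hz', h⟩)⟩
      rintro rfl
      rw [h] at hz'
      simp at hz'
    · simp only [depS, h, hz']; omega

theorem uniq_dist {V : Type*} {P : Finset (Finset V)}
    (h : ∀ D ∈ P, ∀ D' ∈ P, D ≠ D' → Disjoint D D') {D D' : Finset V} (hD : D ∈ P)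
    (hD' : D' ∈ P) {x : V} (hx : x ∈ D) (hx' : x ∈ D') : D = D' := by
  by_contra hne
  exact Finset.disjoint_left.1 (h D hD D' hD' hne) hx hx'

theorem chi_p {n m t : ℕ} {z : VS n m t} (h : chiS z = CS.p) : z = VS.c1 ∨ z = VS.c2 := by
  cases z <;> simp [chiS] at h ⊢

theorem chi_b {n m t : ℕ} {z : VS n m t} {s : Fin t} (h : chiS z = CS.b s) :
    ∃ i, z = VS.y s i := by
  cases z <;> simp [chiS] at h ⊢
  exact h

theorem chi_a {n m t : ℕ} {z : VS n m t} {j : Fin n} (h : chiS z = CS.a j) :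
    z = VS.u j ∨ (∃ s, z = VS.v0 s j) ∨ ∃ s i, z = VS.v s i j := by
  cases z <;> simp [chiS] at h ⊢ <;> exact h

theorem chi_q {n m t : ℕ} {z : VS n m t} (h : chiS z = CS.q) :
    z = VS.root ∨ (∃ i, z = VS.w i) ∨ ∃ s i, z = VS.x s i := by
  cases z <;> simp [chiS] at h ⊢

theorem p_card {n m t : ℕ} {P : Finset (Finset (VS n m t))}
    (h : ∀ D ∈ P, ∀ D' ∈ P, D ≠ D' → Disjoint D D') (Q : Finset (Finset (VS n m t)))
    (hQ : Q ⊆ P) (hp : ∀ D ∈ Q, ∃ x ∈ D, chiS x = CS.p) : Q.card ≤ 2 := by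
  have h1 : ∀ z : VS n m t, (Q.filter fun D => z ∈ D).card ≤ 1 := by
    intro z
    rw [Finset.card_le_one]
    intro a ha b hb
    rw [Finset.mem_filter] at ha hb
    exact uniq_dist h (hQ ha.1) (hQ hb.1) ha.2 hb.2
  have h2 : Q ⊆ (Q.filter fun D => VS.c1 ∈ D) ∪ (Q.filter fun D => VS.c2 ∈ D) := by
    intro D hD
    obtain ⟨x, hx, hxp⟩ := hp D hD
    rw [Finset.mem_union, Finset.mem_filter, Finset.mem_filter]
    rcases chi_p hxp with rfl | rfl
    · exact Or.inl ⟨hD, hx⟩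
    · exact Or.inr ⟨hD, hx⟩
  have h3 := Finset.card_le_card h2
  have h4 := Finset.card_union_le (Q.filter fun D => VS.c1 ∈ D) (Q.filter fun D => VS.c2 ∈ D)
  have h5 := h1 VS.c1
  have h6 := h1 VS.c2
  omega

theorem single_of_wins {n m t : ℕ} {D : Finset (VS n m t)} (hw : winsIn chiS CS.p D)
    (c c' : VS n m t) (hc : c ∈ D) (hc' : c' ∉ D) (hcc : ∀ z : VS n m t, chiS z = CS.p → z = c ∨ z = c') :
    D = {c} := by
  have h1 : cntS chiS CS.p D ≤ 1 := by
    apply cntS_le_one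
    intro a ha b hb ha2 hb2
    have ha' : a = c := by
      rcases hcc a ha2 with h | h
      · exact h
      · exact absurd (h ▸ ha) hc'
    have hb' : b = c := by
      rcases hcc b hb2 with h | h
      · exact h
      · exact absurd (h ▸ hb) hc'
    rw [ha', hb']
  rw [Finset.eq_singleton_iff_unique_mem]
  refine ⟨hc, fun x hx => ?_⟩
  by_cases hxp : chiS x = CS.p
  · rcases hcc x hxp with h | h
    · exact h
    · exact absurd (h ▸ hx) hc'
  · have h2 : cntS chiS (chiS x) D < cntS chiS CS.p D := hw _ hxp
    have h3 := (cntS_pos chiS (chiS x) D).2 ⟨x, hx, rfl⟩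
    omega

theorem b_le_a {n m t : ℕ} (S : Fin m → Finset (Fin n)) (D : Finset (VS n m t))
    (hD : ((GS S).induce (D : Set (VS n m t))).Connected) (s : Fin t) (j : Fin n)
    (i : Fin (m + 1)) (h0 : VS.v0 s j ∈ D) (hy : VS.y s i ∈ D) :
    cntS chiS (CS.b s) D ≤ cntS chiS (CS.a j) D := by
  have hv : ∀ i', VS.v s i' j ∈ D := by
    intro i'
    have := grp_lt n m i' _ i'.2 (off_le S i' (some j))
    exact intS S D hD _ _ _ _ _ _ (VS.v s i' j) h0 rfl hy rfl (pos_v S s i' j) (by omega)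
      (by omega)
  let f : VS n m t → VS n m t
    | .y _ i => Fin.cases (VS.v0 s j) (fun i' => VS.v s i' j) i
    | z => z
  apply cntS_le_of_inj chiS _ _ D f
  · intro x hx hc
    obtain ⟨k, rfl⟩ := chi_b hc
    induction k using Fin.cases with
    | zero => exact ⟨h0, rfl⟩
    | succ k => exact ⟨hv k, rfl⟩
  · intro x hx y hy hc hc' e
    obtain ⟨k, rfl⟩ := chi_b hc
    obtain ⟨k', rfl⟩ := chi_b hc'
    induction k using Fin.cases <;> induction k' using Fin.cases <;> simp [f] at e ⊢
    exact e

theorem backward (n m t : ℕ) (hn : 1 ≤ n) (ht : 1 ≤ t)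
    (S : Fin m → Finset (Fin n)) (P : Finset (Finset (VS n m t)))
    (hP : IsDistrictPartition (GS S) (t + 4) P) (hS : SatisfyingFor chiS CS.p P) :
    ∃ X : Finset (Fin m), X.card ≤ t ∧ ∀ j : Fin n, ∃ i ∈ X, j ∈ S i := by
  obtain ⟨hcard, hne, hdis, hcovP, hconn⟩ := hP
  have hwmem : ∀ D : Finset (VS n m t), winsIn chiS CS.p D → ∃ x ∈ D, chiS x = (CS.p : CS n t) := by
    intro D hw
    rw [← cntS_pos]
    exact lt_of_le_of_lt (Nat.zero_le _) (hw CS.q (by simp))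
  have hw2 : 2 ≤ (P.filter fun D => winsIn chiS CS.p D).card := by
    by_contra hlt
    have h2 := p_card hdis P subset_rfl (by
      intro D hD
      obtain ⟨c, hc⟩ := exists_leads chiS D (hne D hD)
      by_cases hcp : c = CS.p
      · subst hcp
        exact leads_mem _ _ _ (hne D hD) hc
      · exfalso
        have h3 := hS c hcp
        have h4 : 0 < (P.filter fun D => leadsIn chiS c D).card :=
          Finset.card_pos.2 ⟨D, by rw [Finset.mem_filter]; exact ⟨hD, hc⟩⟩
        omega)
    omega
  have hw2' : (P.filter fun D => winsIn chiS CS.p D).card ≤ 2 := by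
    apply p_card hdis _ (Finset.filter_subset _ _)
    intro D hD
    rw [Finset.mem_filter] at hD
    exact hwmem D hD.2
  have hl1 : ∀ c : CS n t, c ≠ CS.p → ∀ D ∈ P, ∀ D' ∈ P, leadsIn chiS c D → leadsIn chiS c D' →
      D = D' := by
    intro c hc D hD D' hD' hl hl'
    have h3 := hS c hc
    have h4 : (P.filter fun D => leadsIn chiS c D).card ≤ 1 := by omega
    rw [Finset.card_le_one] at h4
    exact h4 D (by rw [Finset.mem_filter]; exact ⟨hD, hl⟩) D'
      (by rw [Finset.mem_filter]; exact ⟨hD', hl'⟩)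
  have hc12 : {VS.c1} ∈ P ∧ {VS.c2} ∈ P := by
    obtain ⟨D1, hD1, D2, hD2, hD12⟩ := Finset.one_lt_card.1 (show 1 < _ from hw2)
    rw [Finset.mem_filter] at hD1 hD2
    have key : ∀ D1 ∈ P, ∀ D2 ∈ P, D1 ≠ D2 → winsIn chiS CS.p D1 → winsIn chiS CS.p D2 →
        VS.c1 ∈ D1 → VS.c2 ∈ D2 → {VS.c1} ∈ P ∧ {VS.c2} ∈ P := by
      intro D1 h1 D2 h2 h12 w1 w2 m1 m2
      have hd := hdis D1 h1 D2 h2 h12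
      have e1 := single_of_wins w1 VS.c1 VS.c2 m1 (Finset.disjoint_right.1 hd m2)
        (fun z hz => chi_p hz)
      have e2 := single_of_wins w2 VS.c2 VS.c1 m2 (Finset.disjoint_left.1 hd m1)
        (fun z hz => (chi_p hz).symm)
      rw [← e1, ← e2]
      exact ⟨h1, h2⟩
    obtain ⟨x1, hx1, hp1⟩ := hwmem D1 hD1.2
    obtain ⟨x2, hx2, hp2⟩ := hwmem D2 hD2.2
    rcases chi_p hp1 with rfl | rfl <;> rcases chi_p hp2 with rfl | rfl
    · exact absurd (uniq_dist hdis hD1.1 hD2.1 hx1 hx2) hD12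
    · exact key D1 hD1.1 D2 hD2.1 hD12 hD1.2 hD2.2 hx1 hx2
    · exact key D2 hD2.1 D1 hD1.1 (Ne.symm hD12) hD2.2 hD1.2 hx2 hx1
    · exact absurd (uniq_dist hdis hD1.1 hD2.1 hx1 hx2) hD12
  obtain ⟨hc1, hc2⟩ := hc12
  -- districts with some `u`
  have hU : ∀ D ∈ P, ∀ j, VS.u j ∈ D → ∀ z ∈ D, ∃ j', z = VS.u j' := by
    intro D hD j hj z hz
    have : ∃ k, 2 ≤ k ∧ posS S z = some (0, k) := by
      by_contra hcon
      push Not at hcon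
      obtain ⟨x, hx, hpx, y, hy, h⟩ := cutS S D (hconn D hD) 0 2 _ (VS.u j) z hj hz
        (by omega) rfl hcon
      rcases h with ⟨h, _⟩ | ⟨k0, h, h'⟩
      · omega
      · obtain rfl : k0 = 1 := by omega
        have hyc : y = VS.c2 := pos_inj S (h'.trans rfl)
        subst hyc
        have := uniq_dist hdis hD hc2 hy (Finset.mem_singleton_self _)
        subst this
        simp at hj
    obtain ⟨k, hk, hpz⟩ := this
    cases z <;> simp [posS] at hpz ⊢ <;> omega
  have hUl : ∀ D ∈ P, ∀ j, VS.u j ∈ D → leadsIn chiS (CS.a j) D := by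
    intro D hD j hj c'
    change cntS chiS c' D ≤ cntS chiS (CS.a j) D
    have h1 := (cntS_pos chiS (CS.a j) D).2 ⟨_, hj, rfl⟩
    have h2 : cntS chiS c' D ≤ 1 := by
      apply cntS_le_one
      intro a ha b hb ha2 hb2
      obtain ⟨ja, rfl⟩ := hU D hD j hj a ha
      obtain ⟨jb, rfl⟩ := hU D hD j hj b hb
      have := ha2.trans hb2.symm
      simp only [chiS, CS.a.injEq] at this
      rw [this]
    omega
  have hla : ∀ D ∈ P, ∀ j, leadsIn chiS (CS.a j) D → VS.u j ∈ D := by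
    intro D hD j hl
    obtain ⟨D', hD', hj⟩ := hcovP (VS.u j)
    rw [hl1 (CS.a j) (by simp) D hD D' hD' hl (hUl D' hD' j hj)]
    exact hj
  have hlp : ∀ D ∈ P, leadsIn chiS CS.p D → D = {VS.c1} ∨ D = {VS.c2} := by
    intro D hD hl
    obtain ⟨x, hx, hxp⟩ := leads_mem _ _ _ (hne D hD) hl
    rcases chi_p hxp with rfl | rfl
    · exact Or.inl (uniq_dist hdis hD hc1 hx (Finset.mem_singleton_self _))
    · exact Or.inr (uniq_dist hdis hD hc2 hx (Finset.mem_singleton_self _))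
  -- the root district
  obtain ⟨R, hR, hrR⟩ := hcovP VS.root
  have hRa : ∀ j, ¬ leadsIn chiS (CS.a j) R := by
    intro j hl
    obtain ⟨j', h⟩ := hU R hR j (hla R hR j hl) _ hrR
    simp at h
  have hRq : leadsIn chiS CS.q R := by
    obtain ⟨c, hc⟩ := exists_leads chiS R (hne R hR)
    cases c with
    | p => rcases hlp R hR hc with h | h <;> rw [h] at hrR <;> simp at hrR
    | q => exact hc
    | a j => exact absurd hc (hRa j)
    | b s =>
      exfalso
      obtain ⟨x, hx, hxb⟩ := leads_mem _ _ _ (hne R hR) hc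
      obtain ⟨i, rfl⟩ := chi_b hxb
      have h0 : VS.v0 s ⟨0, hn⟩ ∈ R :=
        prefS S R (hconn R hR) hrR _ _ _ _ (VS.v0 s ⟨0, hn⟩) hx rfl rfl (by simp)
      have h1 := b_le_a S R (hconn R hR) s ⟨0, hn⟩ i h0 hx
      exact hRa ⟨0, hn⟩ (fun c' => (hc c').trans h1)
  have hv0 : ∀ s j, VS.v0 s j ∈ R := by
    intro s j
    by_contra hnot
    obtain ⟨D, hD, hvD⟩ := hcovP (VS.v0 s j)
    have hDR : D ≠ R := by rintro rfl; exact hnot hvD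
    have hrD : VS.root ∉ D := fun h => hDR (uniq_dist hdis hD hR h hrR)
    have hDa : ∀ j', ¬ leadsIn chiS (CS.a j') D := by
      intro j' hl
      obtain ⟨j'', h⟩ := hU D hD j' (hla D hD j' hl) _ hvD
      simp at h
    obtain ⟨c, hc⟩ := exists_leads chiS D (hne D hD)
    cases c with
    | p => rcases hlp D hD hc with h | h <;> rw [h] at hvD <;> simp at hvD
    | q => exact hDR (hl1 _ (by simp) D hD R hR hc hRq)
    | a j' => exact absurd hc (hDa j')
    | b s' =>
      obtain ⟨x, hx, hxb⟩ := leads_mem _ _ _ (hne D hD) hc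
      obtain ⟨i, rfl⟩ := chi_b hxb
      have hss := brS S D (hconn D hD) _ _ _ _ _ _ hvD hx rfl rfl hrD
      obtain rfl : s = s' := Fin.ext (by omega)
      have h1 := b_le_a S D (hconn D hD) s j i hvD hx
      exact hDa j (fun c' => (hc c').trans h1)
  have hex : ∀ j, ∃ s i, VS.x s i ∈ R ∧ VS.v s i j ∉ R := by
    intro j
    by_contra hcon
    push Not at hcon
    let f : VS n m t → VS n m t
      | .root => VS.v0 ⟨0, ht⟩ j
      | .w i => VS.v0 ⟨i + 1, by omega⟩ j
      | .x s i => VS.v s i j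
      | z => z
    have hle : cntS chiS CS.q R ≤ cntS chiS (CS.a j) R := by
      apply cntS_le_of_inj chiS _ _ R f
      · intro x hx hc
        rcases chi_q hc with rfl | ⟨i, rfl⟩ | ⟨s, i, rfl⟩
        · exact ⟨hv0 _ _, rfl⟩
        · exact ⟨hv0 _ _, rfl⟩
        · exact ⟨hcon s i hx, rfl⟩
      · intro x hx y hy hc hc' e
        rcases chi_q hc with rfl | ⟨i, rfl⟩ | ⟨s, i, rfl⟩ <;>
          rcases chi_q hc' with rfl | ⟨i', rfl⟩ | ⟨s', i', rfl⟩ <;> simp [f] at e ⊢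
        · exact Fin.ext (by omega)
        · exact e
    exact hRa j (fun c' => (hRq c').trans hle)
  let T : Fin t → Finset (Fin m) := fun s =>
    Finset.univ.filter fun i => VS.x s i ∈ R ∧ ∃ j, VS.v s i j ∉ R
  have hT : ∀ s, (T s).card ≤ 1 := by
    intro s
    rw [Finset.card_le_one]
    have key : ∀ i i' : Fin m, i < i' → VS.x s i' ∈ R → (∃ j, VS.v s i j ∉ R) → False := by
      rintro i i' hlt hx ⟨j, hj⟩
      apply hj
      have := grp_lt2 n i i' (offS S i (some j)) (offS S i' none) hlt (off_le _ _ _)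
      exact prefS S R (hconn R hR) hrR _ _ _ _ _ hx (pos_x S s i') (pos_v S s i j) (by omega)
    intro a ha b hb
    simp only [T, Finset.mem_filter, Finset.mem_univ, true_and] at ha hb
    rcases lt_trichotomy a b with h | h | h
    · exact (key a b h hb.1 ha.2).elim
    · exact h
    · exact (key b a h ha.1 hb.2).elim
  refine ⟨Finset.univ.biUnion T, ?_, ?_⟩
  · refine Finset.card_biUnion_le.trans ((Finset.sum_le_sum fun s _ => hT s).trans ?_)
    simp
  · intro j
    obtain ⟨s, i, hx, hv⟩ := hex j
    refine ⟨i, ?_, ?_⟩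
    · simp only [T, Finset.mem_biUnion, Finset.mem_filter, Finset.mem_univ, true_and]
      exact ⟨s, hx, j, hv⟩
    · by_contra hj
      have := off_out S i j hj
      exact hv (prefS S R (hconn R hR) hrR _ _ _ _ _ hx (pos_x S s i) (pos_v S s i j) (by omega))

def KS {n m t : ℕ} (S : Fin m → Finset (Fin n)) (f : Fin t → Fin m) (s : Fin t) : ℕ :=
  n + (f s : ℕ) * (n + 1) + offS S (f s) none

def labS {n m t : ℕ} (S : Fin m → Finset (Fin n)) (f : Fin t → Fin m) :
    VS n m t → Fin 4 ⊕ Fin t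
  | .root => Sum.inl 3
  | .c1 => Sum.inl 0
  | .c2 => Sum.inl 1
  | .u _ => Sum.inl 2
  | .w _ => Sum.inl 3
  | .v0 _ _ => Sum.inl 3
  | .x s i => if n + (i : ℕ) * (n + 1) + offS S i none ≤ KS S f s then Sum.inl 3 else Sum.inr s
  | .v s i j => if n + (i : ℕ) * (n + 1) + offS S i (some j) ≤ KS S f s then Sum.inl 3
      else Sum.inr s
  | .y s _ => Sum.inr s

theorem KS_lt {n m t : ℕ} (S : Fin m → Finset (Fin n)) (f : Fin t → Fin m) (s : Fin t) :
    n ≤ KS S f s ∧ KS S f s < n + m * (n + 1) := by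
  have := grp_lt n m (f s) _ (f s).2 (off_le S (f s) none)
  unfold KS
  omega

theorem lab_sel {n m t : ℕ} (S : Fin m → Finset (Fin n)) (f : Fin t → Fin m) (s : Fin t)
    (k : ℕ) (z : VS n m t) (h : posS S z = some (2 + (s : ℕ), k)) :
    labS S f z = if k ≤ KS S f s then Sum.inl 3 else Sum.inr s := by
  have hK := KS_lt S f s
  cases z with
  | root => simp [posS] at h
  | x s' i =>
    rw [pos_x] at h
    simp only [Option.some.injEq, Prod.mk.injEq] at h
    obtain rfl : s' = s := Fin.ext (by omega)
    obtain ⟨_, rfl⟩ := h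
    rfl
  | v s' i j =>
    rw [pos_v] at h
    simp only [Option.some.injEq, Prod.mk.injEq] at h
    obtain rfl : s' = s := Fin.ext (by omega)
    obtain ⟨_, rfl⟩ := h
    rfl
  | v0 s' j =>
    simp only [posS, Option.some.injEq, Prod.mk.injEq] at h
    rw [if_pos (by omega)]
    rfl
  | y s' i =>
    simp only [posS, Option.some.injEq, Prod.mk.injEq] at h
    obtain rfl : s' = s := Fin.ext (by omega)
    rw [if_neg (by omega)]
    rfl
  | _ =>
    simp only [posS, Option.some.injEq, Prod.mk.injEq] at h
    omega

theorem lab_one {n m t : ℕ} (S : Fin m → Finset (Fin n)) (f : Fin t → Fin m)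
    (k : ℕ) (z : VS n m t) (h : posS S z = some (1, k)) : labS S f z = Sum.inl 3 := by
  cases z with
  | root => rfl
  | w i => rfl
  | _ =>
    simp only [posS, Option.some.injEq, Prod.mk.injEq] at h
    omega

theorem lab_zero {n m t : ℕ} (S : Fin m → Finset (Fin n)) (f : Fin t → Fin m)
    (k : ℕ) (z : VS n m t) (h : posS S z = some (0, k)) : labS S f z ≠ Sum.inl 3 ∧
      ∀ s, labS S f z ≠ Sum.inr s := by
  cases z with
  | c1 => simp [labS]
  | c2 => simp [labS]
  | u j => simp [labS]
  | root => simp [posS] at h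
  | _ =>
    simp only [posS, Option.some.injEq, Prod.mk.injEq] at h
    omega

theorem root_or {n m t : ℕ} (S : Fin m → Finset (Fin n)) (z : VS n m t) :
    z = VS.root ∨ (∃ k, posS S z = some (0, k)) ∨ (∃ k, posS S z = some (1, k)) ∨
      ∃ s : Fin t, ∃ k, posS S z = some (2 + (s : ℕ), k) := by
  cases z with
  | root => exact Or.inl rfl
  | c1 => exact Or.inr (Or.inl ⟨_, rfl⟩)
  | c2 => exact Or.inr (Or.inl ⟨_, rfl⟩)
  | u j => exact Or.inr (Or.inl ⟨_, rfl⟩)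
  | w i => exact Or.inr (Or.inr (Or.inl ⟨_, rfl⟩))
  | v0 s j => exact Or.inr (Or.inr (Or.inr ⟨s, _, rfl⟩))
  | x s j => exact Or.inr (Or.inr (Or.inr ⟨s, _, rfl⟩))
  | v s i j => exact Or.inr (Or.inr (Or.inr ⟨s, _, rfl⟩))
  | y s j => exact Or.inr (Or.inr (Or.inr ⟨s, _, rfl⟩))

noncomputable def fibS {n m t : ℕ} (S : Fin m → Finset (Fin n)) (f : Fin t → Fin m)
    (l : Fin 4 ⊕ Fin t) : Finset (VS n m t) := Finset.univ.filter fun z => labS S f z = l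

theorem mem_fib {n m t : ℕ} (S : Fin m → Finset (Fin n)) (f : Fin t → Fin m)
    (l : Fin 4 ⊕ Fin t) (z : VS n m t) : z ∈ fibS S f l ↔ labS S f z = l := by
  unfold fibS
  simp only [Finset.mem_filter, Finset.mem_univ, true_and]

theorem fib0 {n m t : ℕ} (S : Fin m → Finset (Fin n)) (f : Fin t → Fin m) (z : VS n m t)
    (h : labS S f z = Sum.inl 0) : z = VS.c1 := by
  cases z <;> simp only [labS] at h <;> (try split_ifs at h) <;> simp at h ⊢

theorem fib1 {n m t : ℕ} (S : Fin m → Finset (Fin n)) (f : Fin t → Fin m) (z : VS n m t)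
    (h : labS S f z = Sum.inl 1) : z = VS.c2 := by
  cases z <;> simp only [labS] at h <;> (try split_ifs at h) <;> simp at h ⊢

theorem fib2 {n m t : ℕ} (S : Fin m → Finset (Fin n)) (f : Fin t → Fin m) (z : VS n m t)
    (h : labS S f z = Sum.inl 2) : ∃ j, z = VS.u j := by
  cases z <;> simp only [labS] at h <;> (try split_ifs at h) <;> simp at h ⊢

theorem fib_conn {n m t : ℕ} (hn : 1 ≤ n) (S : Fin m → Finset (Fin n)) (f : Fin t → Fin m)
    (l : Fin 4 ⊕ Fin t) : ((GS S).induce (fibS S f l : Set (VS n m t))).Connected := by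
  rcases l with l | s
  · obtain rfl | rfl | rfl | rfl : l = 0 ∨ l = 1 ∨ l = 2 ∨ l = 3 := by omega
    · apply conn_of_desc (GS S) _ (depS S) VS.c1 ((mem_fib _ _ _ _).2 rfl)
      intro x hx hne
      rw [mem_fib] at hx
      exact absurd (fib0 S f x hx) hne
    · apply conn_of_desc (GS S) _ (depS S) VS.c2 ((mem_fib _ _ _ _).2 rfl)
      intro x hx hne
      rw [mem_fib] at hx
      exact absurd (fib1 S f x hx) hne
    · apply conn_of_desc (GS S) _ (depS S) (VS.u ⟨0, hn⟩) ((mem_fib _ _ _ _).2 rfl)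
      intro x hx hne
      rw [mem_fib] at hx
      obtain ⟨j, rfl⟩ := fib2 S f x hx
      have hj : (j : ℕ) ≠ 0 := by
        intro h
        exact hne (congrArg VS.u (Fin.ext h))
      obtain ⟨z', hadj, hd, h⟩ := par_ex S 0 (2 + (j : ℕ)) (VS.u j) rfl
      refine ⟨z', ?_, hadj, hd⟩
      rcases h with ⟨h, _⟩ | ⟨k0, h, hp⟩
      · omega
      · have hz : z' = VS.u ⟨(j : ℕ) - 1, by omega⟩ := by
          apply pos_inj S
          rw [hp]
          simp only [posS, Option.some.injEq, Prod.mk.injEq, true_and]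
          omega
        rw [mem_fib, hz]
        rfl
    · apply conn_of_desc (GS S) (fibS S f (Sum.inl 3)) (depS S) VS.root ((mem_fib _ _ _ _).2 rfl)
      intro x hx hne
      rw [mem_fib] at hx
      rcases root_or S x with h | ⟨k, h⟩ | ⟨k, h⟩ | ⟨s, k, h⟩
      · exact absurd h hne
      · exact absurd hx (lab_zero S f k x h).1
      · obtain ⟨z', hadj, hd, h'⟩ := par_ex S _ _ _ h
        refine ⟨z', ?_, hadj, hd⟩
        rw [mem_fib]
        rcases h' with ⟨_, rfl⟩ | ⟨k0, _, hp⟩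
        · rfl
        · exact lab_one S f _ _ hp
      · obtain ⟨z', hadj, hd, h'⟩ := par_ex S _ _ _ h
        refine ⟨z', ?_, hadj, hd⟩
        rw [mem_fib]
        rw [lab_sel S f s k x h] at hx
        have hk : k ≤ KS S f s := by
          by_contra hk
          rw [if_neg hk] at hx
          simp at hx
        rcases h' with ⟨_, rfl⟩ | ⟨k0, _, hp⟩
        · rfl
        · rw [lab_sel S f s k0 z' hp, if_pos (by omega)]
  · have hK := KS_lt S f s
    obtain ⟨b, hb⟩ := sel_surj S s (KS S f s + 1) (by omega)
    apply conn_of_desc (GS S) _ (depS S) b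
      ((mem_fib _ _ _ _).2 (by rw [lab_sel S f s _ b hb, if_neg (by omega)]))
    intro x hx hne
    rw [mem_fib] at hx
    rcases root_or S x with rfl | ⟨k, h⟩ | ⟨k, h⟩ | ⟨s', k, h⟩
    · simp [labS] at hx
    · exact absurd hx ((lab_zero S f k x h).2 s)
    · rw [lab_one S f _ _ h] at hx
      simp at hx
    · obtain ⟨z', hadj, hd, h'⟩ := par_ex S _ _ _ h
      refine ⟨z', ?_, hadj, hd⟩
      rw [mem_fib]
      rw [lab_sel S f s' k x h] at hx
      have hk : ¬ k ≤ KS S f s' := by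
        intro hk
        rw [if_pos hk] at hx
        simp at hx
      rw [if_neg hk] at hx
      obtain rfl : s' = s := Sum.inr.inj hx
      have hk2 : k ≠ KS S f s' + 1 := by
        rintro rfl
        exact hne (pos_inj S (h.trans hb.symm))
      rcases h' with ⟨_, rfl⟩ | ⟨k0, _, hp⟩
      · omega
      · rw [lab_sel S f s' k0 z' hp, if_neg (by omega)]

theorem fib_ne {n m t : ℕ} (hn : 1 ≤ n) (S : Fin m → Finset (Fin n)) (f : Fin t → Fin m)
    (l : Fin 4 ⊕ Fin t) : (fibS S f l : Finset (VS n m t)).Nonempty := by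
  obtain ⟨⟨z, hz⟩⟩ := (fib_conn hn S f l).nonempty
  exact ⟨z, hz⟩

theorem fib_inj {n m t : ℕ} (hn : 1 ≤ n) (S : Fin m → Finset (Fin n)) (f : Fin t → Fin m) :
    Function.Injective (fibS S f : Fin 4 ⊕ Fin t → Finset (VS n m t)) := by
  intro l l' h
  obtain ⟨z, hz⟩ := fib_ne hn S f l
  have hz' := hz
  rw [h] at hz'
  rw [mem_fib] at hz hz'
  exact hz.symm.trans hz'

def gS {n t : ℕ} : CS n t → Fin 4 ⊕ Fin t
  | .p => Sum.inl 0
  | .q => Sum.inl 3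
  | .a _ => Sum.inl 2
  | .b s => Sum.inr s

theorem b_cnt {n m t : ℕ} (S : Fin m → Finset (Fin n)) (f : Fin t → Fin m) (s : Fin t)
    (c : CS n t) (g : VS n m t → VS n m t)
    (hg : ∀ x ∈ fibS S f (Sum.inr s), chiS x = c → ∃ i : Fin m, g x = VS.y s i.succ)
    (hi : ∀ x ∈ fibS S f (Sum.inr s), ∀ y ∈ fibS S f (Sum.inr s), chiS x = c → chiS y = c →
      g x = g y → x = y) :
    cntS chiS c (fibS S f (Sum.inr s)) < cntS chiS (CS.b s) (fibS S f (Sum.inr s)) := by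
  apply cntS_lt_of_inj chiS _ _ _ g ?_ hi (VS.y s 0)
  · rw [mem_fib]; rfl
  · rfl
  · intro x hx hc
    obtain ⟨i, h⟩ := hg x hx hc
    rw [h]
    simp
  · intro x hx hc
    obtain ⟨i, h⟩ := hg x hx hc
    rw [h, mem_fib]
    exact ⟨rfl, rfl⟩

theorem R_cnt {n m t : ℕ} (S : Fin m → Finset (Fin n)) (f : Fin t → Fin m)
    (j : Fin n) (s0 : Fin t) (hs0 : j ∈ S (f s0)) :
    cntS chiS (CS.a j) (fibS S f (Sum.inl 3)) < cntS chiS CS.q (fibS S f (Sum.inl 3)) := by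
  let g : VS n m t → VS n m t
    | .v0 s _ => if h : (s : ℕ) = 0 then VS.root else VS.w ⟨s - 1, by omega⟩
    | .v s i _ => VS.x s i
    | z => z
  have hle : ∀ s i, labS S f (VS.v s i j) = Sum.inl 3 →
      n + (i : ℕ) * (n + 1) + offS S i (some j) ≤ KS S f s := by
    intro s i h
    by_contra hk
    simp only [labS, if_neg hk] at h
    simp at h
  have hle2 : ∀ s i, labS S f (VS.v s i j) = Sum.inl 3 → i ≤ f s := by
    intro s i h
    have h1 := hle s i h
    by_contra hlt
    push Not at hlt
    have := grp_lt2 n (f s) i (offS S (f s) none) (offS S i (some j)) hlt (off_le _ _ _)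
    unfold KS at h1
    omega
  have key : ∀ x ∈ fibS S f (Sum.inl 3), chiS x = CS.a j →
      (∃ s, x = VS.v0 s j) ∨ ∃ s i, x = VS.v s i j ∧ labS S f (VS.v s i j) = Sum.inl 3 := by
    intro x hx hc
    rw [mem_fib] at hx
    rcases chi_a hc with rfl | ⟨s, rfl⟩ | ⟨s, i, rfl⟩
    · simp [labS] at hx
    · exact Or.inl ⟨s, rfl⟩
    · exact Or.inr ⟨s, i, rfl, hx⟩
  apply cntS_lt_of_inj chiS _ _ _ g ?_ ?_ (VS.x s0 (f s0))
  · rw [mem_fib]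
    simp only [labS]
    exact if_pos le_rfl
  · rfl
  · intro x hx hc
    rcases key x hx hc with ⟨s, rfl⟩ | ⟨s, i, rfl, hl⟩
    · simp only [g]
      split_ifs <;> simp
    · simp only [g, ne_eq, VS.x.injEq, not_and]
      rintro rfl rfl
      have h1 := hle _ _ hl
      have h2 := off_in S _ j hs0
      unfold KS at h1
      omega
  · intro x hx hc
    rcases key x hx hc with ⟨s, rfl⟩ | ⟨s, i, rfl, hl⟩
    · rw [mem_fib]
      simp only [g]
      split_ifs <;> exact ⟨rfl, rfl⟩
    · refine ⟨?_, rfl⟩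
      rw [mem_fib]
      simp only [g, labS]
      rw [if_pos]
      rcases (hle2 s i hl).lt_or_eq with h | h
      · have := grp_lt2 n i (f s) (offS S i none) (offS S (f s) none) h (off_le _ _ _)
        unfold KS
        omega
      · rw [h]; exact le_rfl
  · intro x hx y hy hc hc' e
    rcases key x hx hc with ⟨s, rfl⟩ | ⟨s, i, rfl, hl⟩ <;>
      rcases key y hy hc' with ⟨s', rfl⟩ | ⟨s', i', rfl, hl'⟩ <;> simp only [g] at e
    · congr 1
      apply Fin.ext
      split_ifs at e <;> first | omega | (simp at e; done) | (simp at e; omega)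
    · split_ifs at e <;> simp at e
    · split_ifs at e <;> simp at e
    · simp only [VS.x.injEq] at e
      rw [e.1, e.2]

theorem leads_lab {n m t : ℕ} (hn : 1 ≤ n) (S : Fin m → Finset (Fin n)) (f : Fin t → Fin m)
    (hf : ∀ j, ∃ s, j ∈ S (f s)) (c : CS n t) (hc : c ≠ CS.p) (l : Fin 4 ⊕ Fin t)
    (hl : leadsIn chiS c (fibS S f l)) : l = gS c := by
  obtain ⟨x, hx, hxc⟩ := leads_mem _ _ _ (fib_ne hn S f l) hl
  rw [mem_fib] at hx
  rcases l with l | s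
  · obtain rfl | rfl | rfl | rfl : l = 0 ∨ l = 1 ∨ l = 2 ∨ l = 3 := by omega
    · rw [fib0 S f x hx] at hxc
      exact absurd hxc.symm hc
    · rw [fib1 S f x hx] at hxc
      exact absurd hxc.symm hc
    · obtain ⟨j, rfl⟩ := fib2 S f x hx
      rw [← hxc]
      rfl
    · cases c with
      | p => exact absurd rfl hc
      | q => rfl
      | a j =>
        obtain ⟨s0, hs0⟩ := hf j
        exact absurd (hl CS.q) (not_le.2 (R_cnt S f j s0 hs0))
      | b s =>
        obtain ⟨i, rfl⟩ := chi_b hxc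
        simp [labS] at hx
  · cases c with
    | p => exact absurd rfl hc
    | q =>
      refine absurd (hl (CS.b s)) (not_le.2 ?_)
      let g : VS n m t → VS n m t
        | .x _ i => VS.y s i.succ
        | z => z
      have key : ∀ x ∈ fibS S f (Sum.inr s), chiS x = CS.q → ∃ i, x = VS.x s i := by
        intro x hx hc
        rw [mem_fib] at hx
        rcases chi_q hc with rfl | ⟨i, rfl⟩ | ⟨s', i, rfl⟩
        · simp [labS] at hx
        · simp [labS] at hx
        · simp only [labS] at hx
          split_ifs at hx
          rw [Sum.inr.inj hx]
          exact ⟨i, rfl⟩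
      apply b_cnt S f s _ g
      · intro x hx hc
        obtain ⟨i, rfl⟩ := key x hx hc
        exact ⟨i, rfl⟩
      · intro x hx y hy hc hc' e
        obtain ⟨i, rfl⟩ := key x hx hc
        obtain ⟨i', rfl⟩ := key y hy hc'
        simpa [g] using e
    | a j =>
      refine absurd (hl (CS.b s)) (not_le.2 ?_)
      let g : VS n m t → VS n m t
        | .v _ i _ => VS.y s i.succ
        | z => z
      have key : ∀ x ∈ fibS S f (Sum.inr s), chiS x = CS.a j → ∃ i, x = VS.v s i j := by
        intro x hx hc
        rw [mem_fib] at hx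
        rcases chi_a hc with rfl | ⟨i, rfl⟩ | ⟨s', i, rfl⟩
        · simp [labS] at hx
        · simp [labS] at hx
        · simp only [labS] at hx
          split_ifs at hx
          rw [Sum.inr.inj hx]
          exact ⟨i, rfl⟩
      apply b_cnt S f s _ g
      · intro x hx hc
        obtain ⟨i, rfl⟩ := key x hx hc
        exact ⟨i, rfl⟩
      · intro x hx y hy hc hc' e
        obtain ⟨i, rfl⟩ := key x hx hc
        obtain ⟨i', rfl⟩ := key y hy hc'
        simpa [g] using e
    | b s' =>
      obtain ⟨i, rfl⟩ := chi_b hxc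
      exact hx.symm

theorem forward (n m t : ℕ) (hn : 1 ≤ n) (S : Fin m → Finset (Fin n)) (f : Fin t → Fin m)
    (hf : ∀ j, ∃ s, j ∈ S (f s)) :
    ∃ P : Finset (Finset (VS n m t)),
        IsDistrictPartition (GS S) (t + 4) P ∧ SatisfyingFor chiS CS.p P := by
  refine ⟨Finset.univ.map ⟨fibS S f, fib_inj hn S f⟩, ⟨?_, ?_, ?_, ?_, ?_⟩, ?_⟩
  · rw [Finset.card_map]
    simp [add_comm]
  · intro D hD
    rw [Finset.mem_map] at hD
    obtain ⟨l, -, rfl⟩ := hD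
    exact fib_ne hn S f l
  · intro D hD D' hD' hne
    rw [Finset.mem_map] at hD hD'
    obtain ⟨l, -, rfl⟩ := hD
    obtain ⟨l', -, rfl⟩ := hD'
    rw [Finset.disjoint_left]
    intro z hz hz'
    simp only [Function.Embedding.coeFn_mk, mem_fib] at hz hz'
    exact hne (by rw [← hz, ← hz'])
  · intro x
    refine ⟨fibS S f (labS S f x), ?_, (mem_fib _ _ _ _).2 rfl⟩
    rw [Finset.mem_map]
    exact ⟨_, Finset.mem_univ _, rfl⟩
  · intro D hD
    rw [Finset.mem_map] at hD
    obtain ⟨l, -, rfl⟩ := hD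
    exact fib_conn hn S f l
  · intro c hc
    have h1 : ((Finset.univ.map ⟨fibS S f, fib_inj hn S f⟩).filter
        fun D => leadsIn chiS c D).card ≤ 1 := by
      rw [Finset.card_le_one]
      intro a ha b hb
      rw [Finset.mem_filter, Finset.mem_map] at ha hb
      obtain ⟨⟨l, -, rfl⟩, ha⟩ := ha
      obtain ⟨⟨l', -, rfl⟩, hb⟩ := hb
      rw [leads_lab hn S f hf c hc l ha, leads_lab hn S f hf c hc l' hb]
    have h2 : 1 < ((Finset.univ.map ⟨fibS S f, fib_inj hn S f⟩).filter
        fun D => winsIn chiS CS.p D).card := by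
      rw [Finset.one_lt_card]
      have key : ∀ l : Fin 4 ⊕ Fin t, ∀ z : VS n m t, chiS z = CS.p → labS S f z = l →
          (∀ y, labS S f y = l → y = z) → winsIn chiS CS.p (fibS S f l) := by
        intro l z hz hl hu c' hc'
        change cntS chiS c' _ < cntS chiS CS.p _
        have h3 := (cntS_pos chiS CS.p (fibS S f l)).2 ⟨z, (mem_fib _ _ _ _).2 hl, hz⟩
        have h4 : ¬ 0 < cntS chiS c' (fibS S f l) := by
          rw [cntS_pos]
          rintro ⟨y, hy, hyc⟩
          rw [mem_fib] at hy
          rw [hu y hy, hz] at hyc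
          exact hc' hyc.symm
        omega
      refine ⟨fibS S f (Sum.inl 0), ?_, fibS S f (Sum.inl 1), ?_, ?_⟩
      · rw [Finset.mem_filter, Finset.mem_map]
        exact ⟨⟨_, Finset.mem_univ _, rfl⟩, key _ VS.c1 rfl rfl (fun y hy => fib0 S f y hy)⟩
      · rw [Finset.mem_filter, Finset.mem_map]
        exact ⟨⟨_, Finset.mem_univ _, rfl⟩, key _ VS.c2 rfl rfl (fun y hy => fib1 S f y hy)⟩
      · intro h
        have := fib_inj hn S f h
        simp at this
    omega

/-- the reduction of Theorem 2.  Let `(U, F, t)` be a Set Cover instance in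
which every element belongs to at least one set.  Then there exists `X ⊆ F` with `|X| ≤ t` and
`∪_{S ∈ X} S = U` iff the subdivided-star gerrymandering instance constructed from `(U, F, t)`
admits a district-partition into `k = t + 4` districts that is satisfying for the preferred
candidate `p`. -/
theorem star_cover_iff_gerrymander (n m t : ℕ) (hn : 1 ≤ n) (ht : 1 ≤ t) (htm : t ≤ m)
    (S : Fin m → Finset (Fin n))
    (hcov : ∀ j : Fin n, ∃ i : Fin m, j ∈ S i) :
    (∃ X : Finset (Fin m), X.card ≤ t ∧ ∀ j : Fin n, ∃ i ∈ X, j ∈ S i) ↔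
      (∃ P : Finset (Finset (VS n m t)),
        IsDistrictPartition (GS S) (t + 4) P ∧ SatisfyingFor chiS CS.p P) := by
  constructor
  · rintro ⟨X, hX, hc⟩
    obtain ⟨i0, hi0, _⟩ := hc ⟨0, hn⟩
    have hemb : Fintype.card X ≤ Fintype.card (Fin t) := by simpa using hX
    obtain ⟨e⟩ := Function.Embedding.nonempty_of_card_le hemb
    have : Nonempty X := ⟨⟨i0, hi0⟩⟩
    have hinv := Function.leftInverse_invFun e.injective
    refine forward n m t hn S (fun s => (Function.invFun e s : X)) ?_
    intro j
    obtain ⟨i, hi, hj⟩ := hc j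
    refine ⟨e ⟨i, hi⟩, ?_⟩
    rw [hinv ⟨i, hi⟩]
    exact hj
  · rintro ⟨P, hP, hS⟩
    exact backward n m t hn ht S P hP hS
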